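/- For 0 ≤ k ≤ n−1, in the polynomial ring F_q[x_1,…,x_n] one has f_{k+1} = Σ_{i=0}^{k} (−1)^{k+i} c_{k,i} · x_{k+1}^{q^i}. -/

import Mathlib

open MvPolynomial

variable (F : Type) [Field F] [Fintype F] (n : ℕ)

/-- `fP F n k` is the orbit product `f_k` (1-indexed, meaningful for `1 ≤ k ≤ n`)
in `F_q[x_1,…,x_n]`. -/
noncomputable def fP (k : ℕ) : MvPolynomial (Fin n) F :=
  if h : 1 ≤ k ∧ k ≤ n then
    ∏ α : Fin (k - 1) → F,
      (X (⟨k - 1, by omega⟩ : Fin n) +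
        ∑ j : Fin (k - 1), C (α j) * X (⟨j.val, by omega⟩ : Fin n))
  else 0

/-- `cP F n s t` is the Dickson-type invariant `c_{s,t}`:
the sum over strictly increasing sequences `1 ≤ j_1 < ⋯ < j_{s-t} ≤ s` (encoded as
strictly monotone functions `Fin (s-t) → Fin s`) of `∏_l f_{j_l}^{(q-1)·q^{t+l-j_l}}`. -/
noncomputable def cP (s t : ℕ) : MvPolynomial (Fin n) F :=
  if s ≤ n then
    ∑ g ∈ Finset.univ.filter (fun g : Fin (s - t) → Fin s => ∀ a b : Fin (s - t), a < b → g a < g b),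
      ∏ l : Fin (s - t),
        fP F n ((g l).val + 1) ^ ((Fintype.card F - 1) * (Fintype.card F) ^ (t + l.val - (g l).val))
  else 0

section Helpers

variable {F n}

/-- Product over the ground field. -/
theorem aux_prod_field {K : Type} [Field K] [Algebra F K] (A B : K) :
    ∏ a : F, (A + algebraMap F K a * B) =
      A ^ Fintype.card F - A * B ^ (Fintype.card F - 1) := by
  classical
  have hq : 1 < Fintype.card F := Fintype.one_lt_card
  by_cases hB : B = 0
  · subst hB
    simp [Finset.prod_const, Finset.card_univ, zero_pow (Nat.sub_ne_zero_of_lt hq)]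
  have h1 : ∏ a : F, (Polynomial.X - Polynomial.C a) =
      (Polynomial.X ^ Fintype.card F - Polynomial.X : Polynomial F) := by
    have hdeg := FiniteField.X_pow_card_sub_X_natDegree_eq F hq
    have hmonic : (Polynomial.X ^ Fintype.card F - Polynomial.X : Polynomial F).Monic :=
      Polynomial.monic_X_pow_sub (by rw [Polynomial.degree_X]; exact_mod_cast hq)
    have h := Polynomial.prod_multiset_X_sub_C_of_monic_of_roots_card_eq hmonic
      (by rw [FiniteField.roots_X_pow_card_sub_X, hdeg]; rfl)
    rw [FiniteField.roots_X_pow_card_sub_X] at h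
    exact h
  have h2 := congrArg (Polynomial.aeval (A / B)) h1
  simp only [map_prod, map_sub, map_pow, Polynomial.aeval_X, Polynomial.aeval_C] at h2
  have h3 : ∏ a : F, (A / B + algebraMap F K a) = ∏ a : F, (A / B - algebraMap F K a) :=
    Fintype.prod_equiv (Equiv.neg F) _ _ (by intro a; simp)
  have h4 : ∏ a : F, (A + algebraMap F K a * B) =
      (∏ a : F, (A / B + algebraMap F K a)) * B ^ Fintype.card F := by
    rw [← Finset.card_univ, ← Finset.prod_const, ← Finset.prod_mul_distrib]
    refine Finset.prod_congr rfl fun a _ => ?_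
    field_simp
  rw [h4, h3, h2, sub_mul, div_pow, div_mul_cancel₀ _ (pow_ne_zero _ hB)]
  obtain ⟨m, hm⟩ : ∃ m, Fintype.card F = m + 1 := ⟨Fintype.card F - 1, by omega⟩
  rw [hm]
  simp only [Nat.add_sub_cancel, pow_succ]
  field_simp

theorem aux_prod (A B : MvPolynomial (Fin n) F) :
    ∏ a : F, (A + C a * B) = A ^ Fintype.card F - A * B ^ (Fintype.card F - 1) := by
  let K := FractionRing (MvPolynomial (Fin n) F)
  apply IsFractionRing.injective (MvPolynomial (Fin n) F) K
  have := aux_prod_field (F := F) (algebraMap _ K A) (algebraMap _ K B)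
  simp only [map_prod, map_sub, map_pow, map_mul, map_add]
  rw [← this]
  refine Finset.prod_congr rfl fun a _ => ?_
  rw [IsScalarTower.algebraMap_apply F (MvPolynomial (Fin n) F) K]
  rfl

/-- Strictly increasing sequences. -/
noncomputable def auxS (m s : ℕ) : Finset (Fin m → Fin s) :=
  Finset.univ.filter (fun g : Fin m → Fin s => ∀ a b : Fin m, a < b → g a < g b)

theorem mem_auxS {m s : ℕ} (g : Fin m → Fin s) :
    g ∈ auxS m s ↔ ∀ a b : Fin m, a < b → g a < g b := by
  simp [auxS]

theorem auxS_le {m s : ℕ} {g : Fin m → Fin s} (hg : g ∈ auxS m s) (l : Fin m) :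
    (g l).val + m ≤ s + l.val := by
  rw [mem_auxS] at hg
  have key : ∀ d : ℕ, ∀ l : Fin m, l.val + d + 1 = m → (g l).val + d + 1 ≤ s := by
    intro d
    induction d with
    | zero => intro l _; have := (g l).2; omega
    | succ d ih =>
      intro l hl
      have h1 := ih ⟨l.val + 1, by omega⟩ (by simp; omega)
      have h2 := hg l ⟨l.val + 1, by omega⟩ (by simp [Fin.lt_def])
      rw [Fin.lt_def] at h2
      omega
  have := key (m - l.val - 1) l (by omega)
  omega

variable (F n) in
/-- Generalized sum. -/
noncomputable def auxE (m s t : ℕ) : MvPolynomial (Fin n) F :=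
  ∑ g ∈ auxS m s, ∏ l : Fin m,
    fP F n ((g l).val + 1) ^ ((Fintype.card F - 1) * (Fintype.card F) ^ (t + l.val - (g l).val))

theorem auxE_frob (m s t : ℕ) (h : s ≤ m + t) :
    auxE F n m s (t + 1) = auxE F n m s t ^ Fintype.card F := by
  rw [← FiniteField.frobeniusAlgHom_apply F, auxE, auxE, map_sum]
  refine Finset.sum_congr rfl fun g hg => ?_
  rw [map_prod]
  refine Finset.prod_congr rfl fun l _ => ?_
  rw [FiniteField.frobeniusAlgHom_apply, ← pow_mul, mul_assoc, ← pow_succ]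
  have := auxS_le hg l
  congr 3
  omega

theorem auxE_empty (m s t : ℕ) (h : s < m) : auxE F n m s t = 0 := by
  have : auxS m s = ∅ := by
    apply Finset.eq_empty_of_forall_notMem
    intro g hg
    have := auxS_le hg ⟨0, by omega⟩
    simp at this
    omega
  rw [auxE, this, Finset.sum_empty]

theorem auxE_zero (s t : ℕ) : auxE F n 0 s t = 1 := by
  have : auxS 0 s = Finset.univ := by
    ext g
    simp only [mem_auxS, Finset.mem_univ, iff_true]
    intro a
    exact a.elim0
  simp [auxE, this]

theorem auxS_succ (m s : ℕ) [DecidableEq (Fin (m + 1) → Fin (s + 1))] :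
    auxS (m + 1) (s + 1) =
      (auxS (m + 1) s).image (fun g l => (g l).castSucc) ∪
      (auxS m s).image (fun g => Fin.snoc (α := fun _ => Fin (s + 1))
        (fun l => (g l).castSucc) (Fin.last s)) := by
  ext g
  simp only [Finset.mem_union, Finset.mem_image, mem_auxS]
  constructor
  · intro hg
    by_cases hl : g (Fin.last m) = Fin.last s
    · right
      have hlt : ∀ l : Fin m, (g l.castSucc).val < s := by
        intro l
        have := hg l.castSucc (Fin.last m) (Fin.castSucc_lt_last l)
        rw [hl] at this
        exact this
      refine ⟨fun l => ⟨(g l.castSucc).val, hlt l⟩, ?_, ?_⟩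
      · intro a b hab
        exact hg a.castSucc b.castSucc hab
      · funext l
        refine Fin.lastCases ?_ (fun i => ?_) l
        · simp [hl]
        · simp
    · left
      have hlt : ∀ l : Fin (m + 1), (g l).val < s := by
        intro l
        have h1 : (g (Fin.last m)).val < s := Fin.val_lt_last hl
        rcases (Fin.le_last l).lt_or_eq with h | h
        · have h2 := hg _ _ h
          rw [Fin.lt_def] at h2
          omega
        · rw [h]; exact h1
      exact ⟨fun l => ⟨(g l).val, hlt l⟩, fun a b hab => hg a b hab, rfl⟩
  · rintro (⟨g', hg', rfl⟩ | ⟨g', hg', rfl⟩)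
    · intro a b hab
      exact hg' a b hab
    · intro a b
      refine Fin.lastCases ?_ (fun i => ?_) b
      · refine Fin.lastCases ?_ (fun j => ?_) a
        · intro h; exact absurd h (lt_irrefl _)
        · intro _; simp [Fin.castSucc_lt_last]
      · refine Fin.lastCases ?_ (fun j => ?_) a
        · intro h; exact absurd h (not_lt.mpr (Fin.le_last _))
        · intro h; simpa using hg' j i h

theorem auxE_succ (m s t : ℕ) :
    auxE F n (m + 1) (s + 1) t = auxE F n (m + 1) s t +
      auxE F n m s t * fP F n (s + 1) ^ ((Fintype.card F - 1) * (Fintype.card F) ^ (t + m - s)) := by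
  classical
  rw [auxE, auxS_succ, Finset.sum_union, Finset.sum_image, Finset.sum_image]
  · congr 1
    rw [auxE, Finset.sum_mul]
    refine Finset.sum_congr rfl fun g _ => ?_
    rw [Fin.prod_univ_castSucc]
    simp
  · intro g _ g' _ h
    funext l
    have := congrFun h l.castSucc
    simpa using this
  · intro g _ g' _ h
    funext l
    have := congrFun h l
    simpa using this
  · rw [Finset.disjoint_left]
    intro g h1 h2
    simp only [Finset.mem_image] at h1 h2
    obtain ⟨g1, _, rfl⟩ := h1
    obtain ⟨g2, _, h⟩ := h2
    have := congrFun h (Fin.last m)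
    simp only [Fin.snoc_last] at this
    exact absurd this.symm (Fin.castSucc_lt_last _).ne

variable (F n) in
/-- Extended coefficients. -/
noncomputable def auxC (s t : ℕ) : MvPolynomial (Fin n) F :=
  if t ≤ s then auxE F n (s - t) s t else 0

theorem auxC_zero (s : ℕ) :
    auxC F n (s + 1) 0 = auxC F n s 0 * fP F n (s + 1) ^ (Fintype.card F - 1) := by
  simp [auxC, auxE_succ, auxE_empty]

theorem auxC_succ (s t : ℕ) (h : t ≤ s) :
    auxC F n (s + 1) (t + 1) = auxC F n s t ^ Fintype.card F +
      auxC F n s (t + 1) * fP F n (s + 1) ^ (Fintype.card F - 1) := by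
  rcases h.lt_or_eq with h | rfl
  · obtain ⟨m, rfl⟩ : ∃ m, s = t + 1 + m := ⟨s - t - 1, by omega⟩
    have e1 : t + 1 + m + 1 - (t + 1) = m + 1 := by omega
    have e2 : t + 1 + m - t = m + 1 := by omega
    have e3 : t + 1 + m - (t + 1) = m := by omega
    rw [auxC, auxC, auxC, if_pos (by omega), if_pos (by omega), if_pos (by omega), e1, e2, e3,
      auxE_succ, auxE_frob _ _ _ (by omega)]
    simp
  · simp [auxC, auxE_zero]

variable (F) in
/-- The product with general first argument. -/
noncomputable def auxP (k : ℕ) (hk : k ≤ n) (Y : MvPolynomial (Fin n) F) :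
    MvPolynomial (Fin n) F :=
  ∏ α : Fin k → F, (Y + ∑ j : Fin k, C (α j) * X (⟨j.val, by omega⟩ : Fin n))

theorem fP_eq (k : ℕ) (hk : k < n) : fP F n (k + 1) = auxP F k hk.le (X ⟨k, hk⟩) := by
  rw [fP, dif_pos ⟨by omega, hk⟩]
  rfl

theorem auxP_succ (k : ℕ) (hk : k + 1 ≤ n) (Y : MvPolynomial (Fin n) F) :
    auxP F (k + 1) hk Y = ∏ a : F, auxP F k (by omega) (Y + C a * X (⟨k, hk⟩ : Fin n)) := by
  simp only [auxP]
  rw [← Fintype.prod_prod_type']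
  refine (Fintype.prod_equiv (Fin.snocEquiv (fun _ : Fin (k + 1) => F)) _ _ ?_).symm
  rintro ⟨a, α⟩
  simp only [Fin.snocEquiv_apply]
  rw [Fin.sum_univ_castSucc]
  simp
  ring

theorem frob_pow_lin (i : ℕ) (a : F) (Y Z : MvPolynomial (Fin n) F) :
    (Y + C a * Z) ^ Fintype.card F ^ i =
      Y ^ Fintype.card F ^ i + C a * Z ^ Fintype.card F ^ i := by
  induction i with
  | zero => simp
  | succ i ih =>
    rw [pow_succ, pow_mul, ih, pow_mul, pow_mul, ← FiniteField.frobeniusAlgHom_apply F, map_add,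
      map_mul]
    simp only [FiniteField.frobeniusAlgHom_apply]
    rw [← map_pow C, FiniteField.pow_card]

theorem auxP_eq (k : ℕ) (hk : k ≤ n) (Y : MvPolynomial (Fin n) F) :
    auxP F k hk Y = ∑ i ∈ Finset.range (k + 1),
      (-1 : MvPolynomial (Fin n) F) ^ (k + i) * auxC F n k i * Y ^ (Fintype.card F) ^ i := by
  induction k generalizing Y with
  | zero => simp [auxP, auxC, auxE_zero]
  | succ k ih =>
    have hlin : ∀ a : F, auxP F k (by omega) (Y + C a * X (⟨k, hk⟩ : Fin n)) =
        auxP F k (by omega) Y + C a * fP F n (k + 1) := by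
      intro a
      rw [fP_eq k hk, ih, ih, ih, Finset.mul_sum, ← Finset.sum_add_distrib]
      refine Finset.sum_congr rfl fun i _ => ?_
      rw [frob_pow_lin]
      ring
    rw [auxP_succ]
    simp only [hlin]
    rw [aux_prod]
    have hA := ih (by omega) Y
    have hq : auxP F k (by omega) Y ^ Fintype.card F = ∑ i ∈ Finset.range (k + 1),
        (-1 : MvPolynomial (Fin n) F) ^ (k + i) * auxC F n k i ^ Fintype.card F *
          Y ^ (Fintype.card F) ^ (i + 1) := by
      rw [hA, ← FiniteField.frobeniusAlgHom_apply F, map_sum]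
      refine Finset.sum_congr rfl fun i _ => ?_
      rw [map_mul, map_mul, map_pow, map_neg, map_one]
      simp only [FiniteField.frobeniusAlgHom_apply]
      rw [← pow_mul, ← pow_succ]
    have hA' : auxP F k (by omega) Y = ∑ i ∈ Finset.range (k + 1 + 1),
        (-1 : MvPolynomial (Fin n) F) ^ (k + i) * auxC F n k i * Y ^ (Fintype.card F) ^ i := by
      rw [Finset.sum_range_succ, ← hA]
      simp [auxC]
    rw [hq, hA', Finset.sum_range_succ' _ (k + 1), Finset.sum_range_succ' _ (k + 1), auxC_zero,
      add_mul, ← sub_sub, Finset.sum_mul, ← Finset.sum_sub_distrib, sub_eq_add_neg]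
    congr 1
    · refine Finset.sum_congr rfl fun i hi => ?_
      rw [auxC_succ _ _ (by simp at hi; omega)]
      ring
    · ring

end Helpers

/-- `f_{k+1} = ∑_{i=0}^{k} (-1)^{k+i} c_{k,i} x_{k+1}^{q^i}` for `0 ≤ k ≤ n-1`. -/
theorem f_succ_eq_sum (k : ℕ) (hk : k < n) :
    fP F n (k + 1) =
      ∑ i ∈ Finset.range (k + 1),
        (-1 : MvPolynomial (Fin n) F) ^ (k + i) * cP F n k i *
          X (⟨k, hk⟩ : Fin n) ^ (Fintype.card F) ^ i := by
  rw [fP_eq k hk, auxP_eq]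
  refine Finset.sum_congr rfl fun i hi => ?_
  have hi' : i ≤ k := by simp at hi; omega
  rw [auxC, if_pos hi', cP, if_pos hk.le]
  rfl
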